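/- Let 𝓓 = (Ω, 𝓑) be a β(i) design with parameter (v, k, d) satisfying v ≤ 2k and k−d ≥ i+1, and set c = k−d. Assume v does not achieve the lower bound (d+2i)·(k−d)/i, i.e. i·v > (d+2i)·(k−d). Then v ≥ k + γ₂, where γ₂ = (2(c−i)d + 2ic + 3i + 1)/(2(i+1)) + (1/(2i(i+1)))·√( −4i(c−i)(c−2i−1)d² − 4i(3i+1)(c−i)(c−2i−1)d − i²·(4(2i+1)c² − 4(2i+1)(3i+1)c + 16i³ + 15i² + 2i − 1) ). Moreover, equality v = k + γ₂ holds if and only if the number of blocks B ∈ 𝓑 with |B ∩ X| = d+i+1 is the same for every X ∈ S₂. -/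

import Mathlib

open Finset

variable {α : Type*} [Fintype α] [DecidableEq α]

/-- `𝓑` is a design on the finite type `α` of cardinality `v`, with block size `k` and
maximal pairwise block intersection size `d`. -/
def IsDesign (𝓑 : Finset (Finset α)) (v k d : ℕ) : Prop :=
  Fintype.card α = v ∧ 2 ≤ 𝓑.card ∧ d < k ∧ k < v ∧
  (∀ B ∈ 𝓑, B.card = k) ∧
  (∀ B ∈ 𝓑, ∀ C ∈ 𝓑, B ≠ C → (B ∩ C).card ≤ d) ∧
  (∃ B ∈ 𝓑, ∃ C ∈ 𝓑, B ≠ C ∧ (B ∩ C).card = d)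

/-- `𝓑` is a `β(i)` design with parameters `(v, k, d)`: a design such that
`1 ≤ i ≤ (v - d + 1)/2` and every `(d + 2i - 1)`-element subset `X` of `Ω` admits a
unique block `B` with `|X ∩ B| ≥ d + i`. -/
def IsBetaDesign (𝓑 : Finset (Finset α)) (v k d i : ℕ) : Prop :=
  IsDesign 𝓑 v k d ∧ 1 ≤ i ∧ 2 * i ≤ v - d + 1 ∧
  ∀ X : Finset α, X.card = d + 2 * i - 1 →
    ∃! B, B ∈ 𝓑 ∧ d + i ≤ (X ∩ B).card

/-- The family `S₂` of all `(d + 2(i+1))`-element subsets `X` of `Ω` such that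
`|X ∩ B| ≤ d + i + 1` for every block `B ∈ 𝓑`. -/
def S2 (𝓑 : Finset (Finset α)) (d i : ℕ) : Finset (Finset α) :=
  (Finset.univ : Finset (Finset α)).filter
    (fun X => X.card = d + 2 * (i + 1) ∧ ∀ B ∈ 𝓑, (X ∩ B).card ≤ d + i + 1)


lemma card_DUV (D U V : Finset α) (hDU : Disjoint D U) (hDV : Disjoint D V) (hUV : Disjoint U V)
    (a b : ℕ) :
    ((univ : Finset (Finset α)).filter (fun X => D ⊆ X ∧ X ⊆ D ∪ U ∪ V ∧
      (X ∩ U).card = a ∧ (X ∩ V).card = b)).card = U.card.choose a * V.card.choose b := by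
  rw [← card_powersetCard, ← card_powersetCard, ← card_product]
  have h1 : ∀ x, x ∈ D → x ∉ U := fun x hx hy => (Finset.disjoint_left.mp hDU) hx hy
  have h2 : ∀ x, x ∈ D → x ∉ V := fun x hx hy => (Finset.disjoint_left.mp hDV) hx hy
  have h3 : ∀ x, x ∈ U → x ∉ V := fun x hx hy => (Finset.disjoint_left.mp hUV) hx hy
  refine Finset.card_nbij' (fun X => (X ∩ U, X ∩ V)) (fun p => D ∪ p.1 ∪ p.2) ?_ ?_ ?_ ?_
  · intro X hX
    simp only [coe_filter, mem_univ, true_and, Set.mem_ofPred_eq] at hX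
    simp [mem_powersetCard, hX.2.2.1, hX.2.2.2]
  · rintro ⟨P, Q⟩ hX
    simp only [coe_product, Set.mem_prod, mem_coe, mem_powersetCard] at hX
    obtain ⟨⟨hP, hPa⟩, ⟨hQ, hQb⟩⟩ := hX
    simp only [coe_filter, mem_univ, true_and, Set.mem_ofPred_eq]
    have e1 : (D ∪ P ∪ Q) ∩ U = P := by
      ext x
      have := h1 x; have := h2 x; have := h3 x
      have := @hP x; have := @hQ x
      simp only [mem_inter, mem_union]; tauto
    have e2 : (D ∪ P ∪ Q) ∩ V = Q := by
      ext x
      have := h1 x; have := h2 x; have := h3 x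
      have := @hP x; have := @hQ x
      simp only [mem_inter, mem_union]; tauto
    refine ⟨?_, ?_, by rw [e1, hPa], by rw [e2, hQb]⟩
    · intro x hx; simp [hx]
    · intro x hx
      have := @hP x; have := @hQ x
      simp only [mem_union] at hx ⊢; tauto
  · intro X hX
    simp only [coe_filter, mem_univ, true_and, Set.mem_ofPred_eq] at hX
    ext x
    have := @hX.1 x
    have := @hX.2.1 x
    simp only [mem_inter, mem_union] at *; tauto
  · rintro ⟨P, Q⟩ hX
    simp only [coe_product, Set.mem_prod, mem_coe, mem_powersetCard] at hX
    obtain ⟨⟨hP, hPa⟩, ⟨hQ, hQb⟩⟩ := hX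
    simp only [Prod.mk.injEq]
    constructor
    · ext x
      have := h1 x; have := h2 x; have := h3 x
      have := @hP x; have := @hQ x
      simp only [mem_inter, mem_union]; tauto
    · ext x
      have := h1 x; have := h2 x; have := h3 x
      have := @hP x; have := @hQ x
      simp only [mem_inter, mem_union]; tauto

lemma erase_sum (m : ℕ) (φ : Finset α → ℕ) :
    ∑ X ∈ powersetCard (m + 1) (univ : Finset α), ∑ x ∈ X, φ (X.erase x)
      = (Fintype.card α - m) * ∑ Y ∈ powersetCard m (univ : Finset α), φ Y := by
  have h : ∀ Y ∈ powersetCard m (univ : Finset α), ∑ x ∈ Yᶜ, φ Y = (Fintype.card α - m) * φ Y := by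
    intro Y hY
    rw [mem_powersetCard] at hY
    rw [sum_const, card_compl, hY.2, smul_eq_mul]
  rw [mul_sum, ← sum_congr rfl h, sum_sigma', sum_sigma']
  refine sum_nbij' (fun p => ⟨p.1.erase p.2, p.2⟩) (fun p => ⟨insert p.2 p.1, p.2⟩) ?_ ?_ ?_ ?_ ?_
  · rintro ⟨X, x⟩ h
    simp only [mem_sigma, mem_powersetCard, subset_univ, true_and] at h
    simp [mem_powersetCard, card_erase_of_mem h.2, h.1]
  · rintro ⟨X, x⟩ h
    simp only [mem_sigma, mem_powersetCard, subset_univ, true_and, mem_compl] at h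
    simp [mem_powersetCard, card_insert_of_notMem h.2, h.1]
  · rintro ⟨X, x⟩ h
    simp only [mem_sigma, mem_powersetCard, subset_univ, true_and] at h
    simp [insert_erase h.2]
  · rintro ⟨X, x⟩ h
    simp only [mem_sigma, mem_powersetCard, subset_univ, true_and, mem_compl] at h
    simp [erase_insert h.2]
  · rintro ⟨X, x⟩ h
    rfl

/-- number of `x ∈ X` with `t ≤ |(X \ x) ∩ B|`. -/
lemma sum_erase_ind (X B : Finset α) (t : ℕ) :
    ∑ x ∈ X, (if t ≤ (X.erase x ∩ B).card then 1 else 0)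
      = (if t + 1 ≤ (X ∩ B).card then X.card else 0)
        + (if (X ∩ B).card = t then X.card - t else 0) := by
  by_cases h1 : t + 1 ≤ (X ∩ B).card
  · rw [if_pos h1, if_neg (by omega), add_zero, card_eq_sum_ones]
    refine sum_congr rfl fun x hx => if_pos ?_
    rw [erase_inter]
    have := pred_card_le_card_erase (s := X ∩ B) (a := x)
    omega
  · rw [if_neg h1, zero_add]
    by_cases h2 : (X ∩ B).card = t
    · rw [if_pos h2, ← card_filter]
      have : X.filter (fun x => t ≤ (X.erase x ∩ B).card) = X \ (X ∩ B) := by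
        ext x
        simp only [mem_filter, mem_sdiff, mem_inter]
        refine and_congr_right fun hx => ?_
        rw [erase_inter]
        constructor
        · rintro h ⟨_, hb⟩
          rw [card_erase_of_mem (by simp [hx, hb])] at h
          have : 0 < (X ∩ B).card := card_pos.mpr ⟨x, by simp [hx, hb]⟩
          omega
        · intro h
          rw [erase_eq_of_notMem (by simpa using h)]; omega
      rw [this, card_sdiff_of_subset inter_subset_left, h2]
    · rw [if_neg h2]
      refine sum_eq_zero fun x hx => if_neg ?_
      rw [erase_inter]
      have := card_erase_le (s := X ∩ B) (a := x)
      omega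

/-- the number of `m`-sets meeting `B` in at least `t` points -/
def ff (B : Finset α) (m t : ℕ) : ℕ :=
  ∑ X ∈ powersetCard m (univ : Finset α), if t ≤ (X ∩ B).card then 1 else 0

/-- the number of `m`-sets meeting `B` in exactly `t` points -/
def gg (B : Finset α) (m t : ℕ) : ℕ :=
  ∑ X ∈ powersetCard m (univ : Finset α), if (X ∩ B).card = t then 1 else 0

/-- the number of `m`-sets meeting every block in fewer than `t` points -/
def nn (𝓑 : Finset (Finset α)) (m t : ℕ) : ℕ :=
  ∑ X ∈ powersetCard m (univ : Finset α), if ∀ B ∈ 𝓑, (X ∩ B).card < t then 1 else 0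

lemma ff_succ (B : Finset α) (m t : ℕ) : ff B m t = ff B m (t + 1) + gg B m t := by
  unfold ff gg
  rw [← sum_add_distrib]
  refine sum_congr rfl fun X _ => ?_
  split_ifs <;> omega

lemma ff_rec (B : Finset α) (m t : ℕ) :
    (Fintype.card α - m) * ff B m t = (m + 1) * ff B (m + 1) (t + 1)
      + (m + 1 - t) * gg B (m + 1) t := by
  unfold ff gg
  rw [← erase_sum m (fun X => if t ≤ (X ∩ B).card then 1 else 0), mul_sum, mul_sum,
    ← sum_add_distrib]
  refine sum_congr rfl fun X hX => ?_
  rw [sum_erase_ind, (mem_powersetCard.mp hX).2]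
  simp

lemma gg_eq (B : Finset α) (m t : ℕ) (h : t ≤ m) :
    gg B m t = B.card.choose t * (Fintype.card α - B.card).choose (m - t) := by
  have := card_DUV ∅ B Bᶜ (by simp) (by simp) (disjoint_compl_right) t (m - t)
  rw [card_compl] at this
  rw [← this]
  unfold gg
  rw [← card_filter]
  congr 1
  ext X
  have e : (X ∩ B).card + (X ∩ Bᶜ).card = X.card := by
    rw [← sdiff_eq_inter_compl, card_inter_add_card_sdiff]
  simp only [mem_filter, mem_powersetCard, subset_univ, true_and, mem_univ, empty_subset,
    empty_union, union_compl]
  omega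

lemma inter3 (X B C : Finset α) : (X ∩ B).card + (X ∩ C).card ≤ X.card + (X ∩ (B ∩ C)).card := by
  have h := card_union_add_card_inter (X ∩ B) (X ∩ C)
  have e : (X ∩ B) ∩ (X ∩ C) = X ∩ (B ∩ C) := by ext; simp; tauto
  have : (X ∩ B ∪ X ∩ C).card ≤ X.card :=
    card_le_card (union_subset inter_subset_left inter_subset_left)
  rw [e] at h
  omega

lemma inter3' (X B C : Finset α) : (X ∩ B).card + (X ∩ C).card ≤ X.card + (B ∩ C).card :=
  (inter3 X B C).trans (Nat.add_le_add_left (card_le_card inter_subset_right) _)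

lemma nn_eq (𝓑 : Finset (Finset α)) (m t d : ℕ)
    (hd : ∀ B ∈ 𝓑, ∀ C ∈ 𝓑, B ≠ C → (B ∩ C).card ≤ d) (hm : m + d < 2 * t) :
    (Fintype.card α).choose m = nn 𝓑 m t + ∑ B ∈ 𝓑, ff B m t := by
  unfold nn ff
  rw [sum_comm, ← sum_add_distrib, ← card_univ, ← card_powersetCard, card_eq_sum_ones]
  refine sum_congr rfl fun X hX => ?_
  rw [mem_powersetCard] at hX
  by_cases h : ∀ B ∈ 𝓑, (X ∩ B).card < t
  · have h0 : ∀ B ∈ 𝓑, (if t ≤ (X ∩ B).card then 1 else 0) = 0 := by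
      intro B hB
      have := h B hB
      rw [if_neg]; omega
    rw [if_pos h, sum_eq_zero h0, add_zero]
  · rw [if_neg h]
    push Not at h
    obtain ⟨B, hB, hBt⟩ := h
    rw [sum_eq_single B]
    · simp [hBt]
    · intro C hC hne
      rw [if_neg]
      intro hCt
      have := inter3' X B C
      have := hd B hB C hC hne.symm
      omega
    · exact fun h => absurd hB h

/-- `d + 2s`-sets meeting each block in at most `d + s` points -/
def SS (𝓑 : Finset (Finset α)) (d s : ℕ) : Finset (Finset α) :=
  (Finset.univ : Finset (Finset α)).filter
    (fun X => X.card = d + 2 * s ∧ ∀ B ∈ 𝓑, (X ∩ B).card ≤ d + s)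

/-- number of blocks meeting `X` in `d + s` points -/
def pp (𝓑 : Finset (Finset α)) (d s : ℕ) (X : Finset α) : ℕ :=
  (𝓑.filter (fun B => (X ∩ B).card = d + s)).card

/-- ordered pairs of blocks meeting in `d` points -/
def NN (𝓑 : Finset (Finset α)) (d : ℕ) : ℕ :=
  (𝓑.offDiag.filter (fun p => (p.1 ∩ p.2).card = d)).card

lemma mem_SS_of (𝓑 : Finset (Finset α)) (d s : ℕ)
    (hd : ∀ B ∈ 𝓑, ∀ C ∈ 𝓑, B ≠ C → (B ∩ C).card ≤ d) (X B : Finset α) (hB : B ∈ 𝓑)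
    (h1 : X.card = d + 2 * s) (h2 : (X ∩ B).card = d + s) : X ∈ SS 𝓑 d s := by
  simp only [SS, mem_filter, mem_univ, true_and]
  refine ⟨h1, fun C hC => ?_⟩
  by_cases h : B = C
  · rw [← h, h2]
  · have := inter3' X B C
    have := hd B hB C hC h
    omega

lemma card_SS (𝓑 : Finset (Finset α)) (d s : ℕ) :
    (SS 𝓑 d s).card = nn 𝓑 (d + 2 * s) (d + s + 1) := by
  unfold SS nn
  rw [← card_filter]
  congr 1
  ext X
  simp only [mem_filter, mem_univ, true_and, mem_powersetCard, subset_univ, Nat.lt_succ_iff]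

lemma sum_pp (𝓑 : Finset (Finset α)) (d s : ℕ)
    (hd : ∀ B ∈ 𝓑, ∀ C ∈ 𝓑, B ≠ C → (B ∩ C).card ≤ d) :
    ∑ X ∈ SS 𝓑 d s, pp 𝓑 d s X = ∑ B ∈ 𝓑, gg B (d + 2 * s) (d + s) := by
  unfold pp gg
  simp_rw [card_filter]
  rw [sum_comm]
  refine sum_congr rfl fun B hB => ?_
  rw [← card_filter, ← card_filter]
  congr 1
  ext X
  simp only [mem_filter, mem_powersetCard, subset_univ, true_and]
  constructor
  · rintro ⟨h, h'⟩
    simp only [SS, mem_filter] at h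
    exact ⟨h.2.1, h'⟩
  · rintro ⟨h, h'⟩
    exact ⟨mem_SS_of 𝓑 d s hd X B hB h h', h'⟩

lemma pair_count (𝓑 : Finset (Finset α)) (k d s : ℕ) (hk : ∀ B ∈ 𝓑, B.card = k)
    (hd : ∀ B ∈ 𝓑, ∀ C ∈ 𝓑, B ≠ C → (B ∩ C).card ≤ d) (B C : Finset α) (hB : B ∈ 𝓑)
    (hC : C ∈ 𝓑) (hne : B ≠ C) :
    ((SS 𝓑 d s).filter (fun X => (X ∩ B).card = d + s ∧ (X ∩ C).card = d + s)).card
      = if (B ∩ C).card = d then ((k - d).choose s) ^ 2 else 0 := by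
  have hBC := hd B hB C hC hne
  by_cases h : (B ∩ C).card = d
  · rw [if_pos h]
    have h0 := card_DUV (B ∩ C) (B \ C) (C \ B)
      (by rw [Finset.disjoint_left]; intro x; simp; tauto)
      (by rw [Finset.disjoint_left]; intro x; simp; tauto)
      (by rw [Finset.disjoint_left]; intro x; simp; tauto) s s
    have e1 := card_inter_add_card_sdiff B C
    have e2 := card_inter_add_card_sdiff C B
    rw [inter_comm C B] at e2
    rw [hk B hB] at e1
    rw [hk C hC] at e2
    rw [show (B \ C).card = k - d by omega, show (C \ B).card = k - d by omega, ← sq] at h0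
    rw [← h0]
    congr 1
    ext X
    simp only [mem_filter, mem_univ, true_and]
    have a1 : (X ∩ B).card = (X ∩ (B ∩ C)).card + (X ∩ (B \ C)).card := by
      rw [← card_inter_add_card_sdiff (X ∩ B) C, inter_assoc, inter_sdiff_assoc]
    have a2 : (X ∩ C).card = (X ∩ (B ∩ C)).card + (X ∩ (C \ B)).card := by
      rw [← card_inter_add_card_sdiff (X ∩ C) B, inter_assoc, inter_sdiff_assoc, inter_comm C B]
    have a3 : X.card = (X ∩ (B ∩ C)).card + (X ∩ (B \ C)).card + (X ∩ (C \ B)).card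
        + (X \ (B ∪ C)).card := by
      rw [← card_inter_add_card_sdiff X B, a1, ← card_inter_add_card_sdiff (X \ B) C,
        sdiff_sdiff_left]
      have : X \ B ∩ C = X ∩ (C \ B) := by ext; simp; tauto
      rw [this]; simp only [sup_eq_union]; omega
    have a4 : (X ∩ (B ∩ C)).card ≤ (B ∩ C).card := card_le_card inter_subset_right
    constructor
    · rintro ⟨hX, hb, hc⟩
      simp only [SS, mem_filter, mem_univ, true_and] at hX
      have a5 : (X ∩ (B ∩ C)).card = (B ∩ C).card := by omega
      have a6 : X ∩ (B ∩ C) = B ∩ C := eq_of_subset_of_card_le inter_subset_right a5.ge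
      have a7 : X \ (B ∪ C) = ∅ := by rw [← card_eq_zero]; omega
      refine ⟨inter_eq_right.mp a6, ?_, by omega, by omega⟩
      rw [sdiff_eq_empty_iff_subset] at a7
      intro x hx
      have := a7 hx
      simp only [mem_union, mem_inter, mem_sdiff] at *
      tauto
    · rintro ⟨g1, g2, g3, g4⟩
      have a6 : X ∩ (B ∩ C) = B ∩ C := inter_eq_right.mpr g1
      have a7 : X \ (B ∪ C) = ∅ := by
        rw [sdiff_eq_empty_iff_subset]
        intro x hx
        have := g2 hx
        simp only [mem_union, mem_inter, mem_sdiff] at *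
        tauto
      rw [a6] at a1 a2 a3
      rw [a7, card_empty] at a3
      exact ⟨mem_SS_of 𝓑 d s hd X B hB (by omega) (by omega), by omega, by omega⟩
  · rw [if_neg h, card_eq_zero, filter_eq_empty_iff]
    rintro X hX ⟨h1, h2⟩
    simp only [SS, mem_filter, mem_univ, true_and] at hX
    have := inter3' X B C
    omega

lemma sum_pp_sq (𝓑 : Finset (Finset α)) (k d s : ℕ) (hk : ∀ B ∈ 𝓑, B.card = k)
    (hd : ∀ B ∈ 𝓑, ∀ C ∈ 𝓑, B ≠ C → (B ∩ C).card ≤ d) :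
    ∑ X ∈ SS 𝓑 d s, (pp 𝓑 d s X) ^ 2 = ∑ X ∈ SS 𝓑 d s, pp 𝓑 d s X
      + NN 𝓑 d * ((k - d).choose s) ^ 2 := by
  have h1 : ∀ X ∈ SS 𝓑 d s, (pp 𝓑 d s X) ^ 2 = pp 𝓑 d s X
      + ∑ p ∈ 𝓑.offDiag, if ((X ∩ p.1).card = d + s ∧ (X ∩ p.2).card = d + s) then 1 else 0 := by
    intro X _
    have e := offDiag_card (𝓑.filter (fun B => (X ∩ B).card = d + s))
    have e' : (𝓑.filter (fun B => (X ∩ B).card = d + s)).offDiag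
        = 𝓑.offDiag.filter
          (fun p => ((X ∩ p.1).card = d + s ∧ (X ∩ p.2).card = d + s)) := by
      ext ⟨B, C⟩
      simp only [mem_offDiag, mem_filter]; tauto
    rw [← card_filter, ← e', e]
    unfold pp
    have := Nat.le_mul_self (𝓑.filter (fun B => (X ∩ B).card = d + s)).card
    rw [sq]; omega
  rw [sum_congr rfl h1, sum_add_distrib, sum_comm]
  congr 1
  have h2 : ∀ p ∈ 𝓑.offDiag, (∑ X ∈ SS 𝓑 d s,
      if ((X ∩ p.1).card = d + s ∧ (X ∩ p.2).card = d + s) then 1 else 0)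
      = if (p.1 ∩ p.2).card = d then ((k - d).choose s) ^ 2 else 0 := by
    rintro ⟨B, C⟩ h
    rw [mem_offDiag] at h
    rw [← card_filter]
    exact pair_count 𝓑 k d s hk hd B C h.1 h.2.1 h.2.2
  rw [sum_congr rfl h2, ← sum_filter, sum_const, smul_eq_mul, NN]

lemma pp_const (𝓑 : Finset (Finset α)) (d i : ℕ) (hi : 1 ≤ i)
    (hβ : ∀ X : Finset α, X.card = d + 2 * i - 1 → ∃! B, B ∈ 𝓑 ∧ d + i ≤ (X ∩ B).card)
    (X : Finset α) (hX : X ∈ SS 𝓑 d i) : i * pp 𝓑 d i X = d + 2 * i := by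
  simp only [SS, mem_filter, mem_univ, true_and] at hX
  have h1 : ∑ x ∈ X, ∑ B ∈ 𝓑, (if d + i ≤ (X.erase x ∩ B).card then 1 else 0) = d + 2 * i := by
    rw [← hX.1, card_eq_sum_ones]
    refine sum_congr rfl fun x hx => ?_
    obtain ⟨B, hB, hu⟩ := hβ (X.erase x) (by rw [card_erase_of_mem hx, hX.1])
    rw [sum_eq_single B]
    · rw [if_pos hB.2]
    · intro C hC hne
      rw [if_neg]
      exact fun h => hne (hu C ⟨hC, h⟩)
    · exact fun h => absurd hB.1 h
  rw [← h1, sum_comm]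
  have h2 : ∀ B ∈ 𝓑, (∑ x ∈ X, if d + i ≤ (X.erase x ∩ B).card then 1 else 0)
      = if (X ∩ B).card = d + i then i else 0 := by
    intro B hB
    have := hX.2 B hB
    rw [sum_erase_ind, if_neg (by omega), zero_add, hX.1]
    split_ifs <;> omega
  rw [sum_congr rfl h2, ← sum_filter, sum_const, smul_eq_mul, mul_comm, pp]

lemma nn_zero (𝓑 : Finset (Finset α)) (d i : ℕ)
    (hβ : ∀ X : Finset α, X.card = d + 2 * i - 1 → ∃! B, B ∈ 𝓑 ∧ d + i ≤ (X ∩ B).card) :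
    nn 𝓑 (d + 2 * i - 1) (d + i) = 0 := by
  unfold nn
  refine sum_eq_zero fun X hX => if_neg fun h => ?_
  obtain ⟨B, hB, _⟩ := hβ X (mem_powersetCard.mp hX).2
  have := h B hB.1
  omega

lemma nn_rec1 (𝓑 : Finset (Finset α)) (m t d : ℕ) (hm : m ≤ Fintype.card α) (ht : t ≤ m + 1)
    (hd : ∀ B ∈ 𝓑, ∀ C ∈ 𝓑, B ≠ C → (B ∩ C).card ≤ d) (hmt : m + d < 2 * t) :
    ((m : ℝ) + 1) * nn 𝓑 (m + 1) (t + 1) = ((Fintype.card α : ℝ) - m) * nn 𝓑 m t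
      + ((m : ℝ) + 1 - t) * ∑ B ∈ 𝓑, (gg B (m + 1) t : ℝ) := by
  have h1 := congrArg (Nat.cast : ℕ → ℝ) (nn_eq 𝓑 m t d hd hmt)
  have h2 := congrArg (Nat.cast : ℕ → ℝ) (nn_eq 𝓑 (m + 1) (t + 1) d hd (by omega))
  have h3 : ((Fintype.card α).choose (m + 1) : ℝ) * (m + 1)
      = (Fintype.card α).choose m * ((Fintype.card α : ℝ) - m) := by
    have := congrArg (Nat.cast : ℕ → ℝ) (Nat.choose_succ_right_eq (Fintype.card α) m)
    push_cast [Nat.cast_sub hm] at this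
    exact this
  have h4 : ∑ B ∈ 𝓑, ((Fintype.card α : ℝ) - m) * ff B m t = ∑ B ∈ 𝓑,
      (((m : ℝ) + 1) * ff B (m + 1) (t + 1) + ((m : ℝ) + 1 - t) * gg B (m + 1) t) := by
    refine sum_congr rfl fun B _ => ?_
    have := congrArg (Nat.cast : ℕ → ℝ) (ff_rec B m t)
    push_cast [Nat.cast_sub hm, Nat.cast_sub ht] at this
    exact this
  rw [sum_add_distrib, ← mul_sum, ← mul_sum, ← mul_sum] at h4
  push_cast at h1 h2
  linear_combination -((m : ℝ) + 1) * h2 + h3 + ((Fintype.card α : ℝ) - m) * h1 + h4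

lemma nn_rec2 (𝓑 : Finset (Finset α)) (m t d : ℕ) (hm : m ≤ Fintype.card α) (ht : t ≤ m + 1)
    (hd : ∀ B ∈ 𝓑, ∀ C ∈ 𝓑, B ≠ C → (B ∩ C).card ≤ d) (hmt : m + 1 + d < 2 * t) :
    ((m : ℝ) + 1) * nn 𝓑 (m + 1) t = ((Fintype.card α : ℝ) - m) * nn 𝓑 m t
      - (t : ℝ) * ∑ B ∈ 𝓑, (gg B (m + 1) t : ℝ) := by
  have h1 := nn_rec1 𝓑 m t d hm ht hd (by omega)
  have h2 := congrArg (Nat.cast : ℕ → ℝ) (nn_eq 𝓑 (m + 1) t d hd hmt)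
  have h3 := congrArg (Nat.cast : ℕ → ℝ) (nn_eq 𝓑 (m + 1) (t + 1) d hd (by omega))
  have h4 : ∑ B ∈ 𝓑, (ff B (m + 1) t : ℝ) = ∑ B ∈ 𝓑, ((ff B (m + 1) (t + 1) : ℝ) + gg B (m + 1) t) := by
    refine sum_congr rfl fun B _ => ?_
    exact_mod_cast ff_succ B (m + 1) t
  rw [sum_add_distrib] at h4
  push_cast at h2 h3
  linear_combination h1 - ((m : ℝ) + 1) * (h2 - h3) - ((m : ℝ) + 1) * h4

lemma TL_sq_le (c d i : ℝ) (hi : 1 ≤ i) (hd : 0 ≤ d) (h1 : i + 1 ≤ c) (h2 : c ≤ 2 * i) :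
    (2 * (c - i) * d + 2 * i * c - 3 * i ^ 2 - i) ^ 2 ≤
      -4 * i * (c - i) * (c - 2 * i - 1) * d ^ 2
           - 4 * i * (3 * i + 1) * (c - i) * (c - 2 * i - 1) * d
           - i ^ 2 * (4 * (2 * i + 1) * c ^ 2 - 4 * (2 * i + 1) * (3 * i + 1) * c
              + 16 * i ^ 3 + 15 * i ^ 2 + 2 * i - 1) := by
  obtain ⟨e, rfl⟩ : ∃ e, c = i + e := ⟨c - i, by ring⟩
  have he1 : 1 ≤ e := by linarith
  have he2 : e ≤ i := by linarith
  have a1 : 0 ≤ d ^ 2 * (4 * e * (i * (i + 1 - e) - e)) := by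
    have : 0 ≤ (i - e) * (i + 1) := mul_nonneg (by linarith) (by linarith)
    have : 0 ≤ i * (i + 1 - e) - e := by nlinarith
    positivity
  have a2 : 0 ≤ d * (4 * i * e * ((3 * i + 1) * (i + 1 - e) - (2 * e - i - 1))) := by
    have : 0 ≤ (3 * i + 1) * (i - e) := mul_nonneg (by linarith) (by linarith)
    have : 0 ≤ (3 * i + 1) * (i + 1 - e) - (2 * e - i - 1) := by nlinarith
    positivity
  have a3 : 0 ≤ i ^ 2 * ((3 * i + 1) ^ 2 + 4 * (2 * i + 1) * ((e - 1) * (i - e))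
      - (2 * e - i - 1) ^ 2) := by
    have : 0 ≤ (e - 1) * (i - e) := mul_nonneg (by linarith) (by linarith)
    have h3 : (2 * e - i - 1) ^ 2 ≤ (3 * i + 1) ^ 2 := by
      apply sq_le_sq'  <;> linarith
    have : 0 ≤ 4 * (2 * i + 1) * ((e - 1) * (i - e)) := by positivity
    apply mul_nonneg (by positivity); linarith
  nlinarith [a1, a2, a3]

lemma main_identity (v k c d i w A G1 G2 n1 U n2 N x0 x1 : ℝ) (hi : 1 ≤ i) (hd : 0 ≤ d)
    (hk : k = d + c) (hw : v = k + w)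
    (h1 : (d + i + 1) * G1 = (c - i) * A) (h2 : (i + 1) * G2 = (w - i) * G1)
    (h3 : (d + 2 * i) * n1 = i * A)
    (h4 : (d + 2 * i + 1) * U = (v - d - 2 * i) * n1 - (d + i + 1) * G1)
    (h5 : (d + 2 * i + 2) * n2 = (v - d - 2 * i - 1) * U + (i + 1) * G2)
    (h6 : (i + 1) * x1 = (c - i) * x0)
    (h7 : i * (N * x0 ^ 2) = (d + i) * A) :
    (n2 * (G2 + N * x1 ^ 2) - G2 ^ 2) *
      (4 * i ^ 2 * (i + 1) ^ 3 * (d + i + 1) * (d + 2 * i + 2) * (d + 2 * i) * (d + 2 * i + 1))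
    = A ^ 2 * (c - i) * (i * v - (d + 2 * i) * c) *
      ((2 * i * (i + 1) * w - i * (2 * (c - i) * d + 2 * i * c + 3 * i + 1)) ^ 2 -
      (-4 * i * (c - i) * (c - 2 * i - 1) * d ^ 2
           - 4 * i * (3 * i + 1) * (c - i) * (c - 2 * i - 1) * d
           - i ^ 2 * (4 * (2 * i + 1) * c ^ 2 - 4 * (2 * i + 1) * (3 * i + 1) * c
              + 16 * i ^ 3 + 15 * i ^ 2 + 2 * i - 1))) := by
  subst hk
  subst hw
  have p0 : i ≠ 0 := by positivity
  have p1 : i + 1 ≠ 0 := by positivity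
  have p2 : d + i + 1 ≠ 0 := by positivity
  have p3 : d + 2 * i ≠ 0 := by positivity
  have p4 : d + 2 * i + 1 ≠ 0 := by positivity
  have p5 : d + 2 * i + 2 ≠ 0 := by positivity
  have e1 : G1 = (c - i) * A / (d + i + 1) := by rw [eq_div_iff p2]; linarith
  have e2 : G2 = (w - i) * G1 / (i + 1) := by rw [eq_div_iff p1]; linarith
  have e3 : n1 = i * A / (d + 2 * i) := by rw [eq_div_iff p3]; linarith
  have e4 : U = A * (i * (d + c + w) - (d + 2 * i) * c) / ((d + 2 * i) * (d + 2 * i + 1)) := by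
    rw [eq_div_iff (mul_ne_zero p3 p4)]
    linear_combination (d + 2 * i) * h4 - (d + 2 * i) * h1 + (d + c + w - d - 2 * i) * h3
  have e5 : n2 = ((d + c + w - d - 2 * i - 1) * U + (i + 1) * G2) / (d + 2 * i + 2) := by
    rw [eq_div_iff p5]; linarith
  have e6 : N * x1 ^ 2 = (c - i) ^ 2 * (d + i) * A / (i * (i + 1) ^ 2) := by
    rw [eq_div_iff (mul_ne_zero p0 (pow_ne_zero 2 p1))]
    linear_combination i * N * ((i + 1) * x1 + (c - i) * x0) * h6 + (c - i) ^ 2 * h7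
  rw [e6, e5, e2, e1, e4]
  field_simp
  ring

lemma final_real (v k c d i : ℝ) (hi : 1 ≤ i) (hd : 0 ≤ d) (h1 : i + 1 ≤ c) (h2 : c ≤ 2 * i)
    (hk : k = d + c) (hlb : (d + 2 * i) * c < i * v) (γ D T : ℝ)
    (hD : D = -4 * i * (c - i) * (c - 2 * i - 1) * d ^ 2
           - 4 * i * (3 * i + 1) * (c - i) * (c - 2 * i - 1) * d
           - i ^ 2 * (4 * (2 * i + 1) * c ^ 2 - 4 * (2 * i + 1) * (3 * i + 1) * c
              + 16 * i ^ 3 + 15 * i ^ 2 + 2 * i - 1))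
    (hγ : γ = (2 * (c - i) * d + 2 * i * c + 3 * i + 1) / (2 * (i + 1))
      + (1 / (2 * i * (i + 1))) * Real.sqrt D)
    (hT : T = 2 * i * (i + 1) * (v - k) - i * (2 * (c - i) * d + 2 * i * c + 3 * i + 1))
    (hTD : 0 ≤ T ^ 2 - D) :
    k + γ ≤ v ∧ (v = k + γ ↔ T ^ 2 - D = 0) := by
  have hTL := TL_sq_le c d i hi hd h1 h2
  rw [← hD] at hTL
  have hD0 : 0 ≤ D := le_trans (sq_nonneg _) hTL
  have hTT : 2 * (c - i) * d + 2 * i * c - 3 * i ^ 2 - i < T := by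
    subst hk
    rw [hT]
    nlinarith [mul_pos (show 0 < i + 1 by linarith) (sub_pos.mpr hlb)]
  have hs := Real.abs_le_sqrt hTL
  have hs2 : Real.sqrt D ≤ |T| := by
    rw [← Real.sqrt_sq_eq_abs]; exact Real.sqrt_le_sqrt (by linarith)
  have hs3 : Real.sqrt D ≤ T := by
    rw [abs_le] at hs
    rcases abs_cases T with h | h <;> linarith
  have key : 2 * i * (i + 1) * (v - (k + γ)) = T - Real.sqrt D := by
    rw [hγ, hT]
    have : i ≠ 0 := by positivity
    have : i + 1 ≠ 0 := by positivity
    field_simp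
    ring
  have hpos : 0 < 2 * i * (i + 1) := by positivity
  have hss := Real.sq_sqrt hD0
  refine ⟨?_, ?_, ?_⟩
  · by_contra! h
    nlinarith
  · intro h
    have : T = Real.sqrt D := by
      rw [h, sub_self, mul_zero] at key; linarith
    rw [this, hss, sub_self]
  · intro h
    have : T = Real.sqrt D := by
      rw [← sub_eq_zero.mp h, Real.sqrt_sq]
      exact le_trans (Real.sqrt_nonneg _) hs3
    rw [this, sub_self] at key
    rcases mul_eq_zero.mp key with h' | h'
    · linarith
    · linarith

lemma cs_const {β : Type*} (S : Finset β) (p : β → ℕ) (hS : 0 < S.card) :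
    0 ≤ (S.card : ℝ) * ∑ X ∈ S, (p X : ℝ) ^ 2 - (∑ X ∈ S, (p X : ℝ)) ^ 2 ∧
    ((S.card : ℝ) * ∑ X ∈ S, (p X : ℝ) ^ 2 - (∑ X ∈ S, (p X : ℝ)) ^ 2 = 0 ↔
      ∃ m : ℕ, ∀ X ∈ S, p X = m) := by
  set P := ∑ X ∈ S, (p X : ℝ) with hP
  have hid : ∑ X ∈ S, ((S.card : ℝ) * p X - P) ^ 2
      = S.card * ((S.card : ℝ) * ∑ X ∈ S, (p X : ℝ) ^ 2 - P ^ 2) := by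
    have : ∀ X ∈ S, ((S.card : ℝ) * p X - P) ^ 2
        = (S.card : ℝ) ^ 2 * (p X : ℝ) ^ 2 - 2 * S.card * P * p X + P ^ 2 := fun X _ => by ring
    rw [sum_congr rfl this, sum_add_distrib, sum_sub_distrib, ← mul_sum, ← mul_sum, ← hP,
      sum_const, nsmul_eq_mul]
    ring
  have hS' : (0 : ℝ) < S.card := by exact_mod_cast hS
  have hnn : 0 ≤ ∑ X ∈ S, ((S.card : ℝ) * p X - P) ^ 2 := sum_nonneg fun _ _ => sq_nonneg _
  refine ⟨?_, ?_, ?_⟩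
  · rw [hid] at hnn
    exact nonneg_of_mul_nonneg_right hnn hS'
  · intro h
    rw [h, mul_zero, sum_eq_zero_iff_of_nonneg fun _ _ => sq_nonneg _] at hid
    obtain ⟨X0, hX0⟩ := card_pos.mp hS
    refine ⟨p X0, fun X hX => ?_⟩
    have a := pow_eq_zero_iff (two_ne_zero) |>.mp (hid X hX)
    have b := pow_eq_zero_iff (two_ne_zero) |>.mp (hid X0 hX0)
    have : (S.card : ℝ) * p X = S.card * p X0 := by linarith
    exact_mod_cast mul_left_cancel₀ hS'.ne' this
  · rintro ⟨m, hm⟩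
    have e1 : P = S.card * m := by
      rw [hP, sum_congr rfl fun X hX => by rw [hm X hX], sum_const, nsmul_eq_mul]
    have e2 : ∑ X ∈ S, (p X : ℝ) ^ 2 = S.card * (m : ℝ) ^ 2 := by
      rw [sum_congr rfl fun X hX => by rw [hm X hX], sum_const, nsmul_eq_mul]
    rw [e1, e2]; ring

/-- **Theorem 2.** Let `𝓑` be a `β(i)` design with parameter `(v, k, d)`, `v ≤ 2k`,
`k - d ≥ i + 1`, `c = k - d`, and suppose `v` does not achieve the lower bound
`(d + 2i)(k-d)/i`.  Then `v ≥ k + γ₂`, with equality if and only if the number of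
blocks `B` with `|B ∩ X| = d + i + 1` does not depend on the choice of `X ∈ S₂`. -/
theorem beta_design_lower_bound_v (𝓑 : Finset (Finset α)) (v k d i c : ℕ)
    (hB : IsBetaDesign 𝓑 v k d i) (hv : v ≤ 2 * k) (hkd : i + 1 ≤ k - d) (hc : c = k - d)
    (hlb : (d + 2 * i) * (k - d) < i * v)
    (γ₂ : ℝ)
    (hγ₂ : γ₂ = (2 * ((c : ℝ) - (i : ℝ)) * (d : ℝ) + 2 * (i : ℝ) * (c : ℝ)
        + 3 * (i : ℝ) + 1) / (2 * ((i : ℝ) + 1))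
      + (1 / (2 * (i : ℝ) * ((i : ℝ) + 1))) * Real.sqrt
          (-4 * (i : ℝ) * ((c : ℝ) - (i : ℝ)) * ((c : ℝ) - 2 * (i : ℝ) - 1) * (d : ℝ) ^ 2
           - 4 * (i : ℝ) * (3 * (i : ℝ) + 1) * ((c : ℝ) - (i : ℝ))
              * ((c : ℝ) - 2 * (i : ℝ) - 1) * (d : ℝ)
           - (i : ℝ) ^ 2 * (4 * (2 * (i : ℝ) + 1) * (c : ℝ) ^ 2
              - 4 * (2 * (i : ℝ) + 1) * (3 * (i : ℝ) + 1) * (c : ℝ)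
              + 16 * (i : ℝ) ^ 3 + 15 * (i : ℝ) ^ 2 + 2 * (i : ℝ) - 1))) :
    (k : ℝ) + γ₂ ≤ (v : ℝ) ∧
    ((v : ℝ) = (k : ℝ) + γ₂ ↔ ∃ m : ℕ, ∀ X ∈ S2 𝓑 d i,
      (𝓑.filter (fun B => (X ∩ B).card = d + i + 1)).card = m) := by
  obtain ⟨⟨hcard, hb2, hdk, hkv, hk, hd, -⟩, hi, -, hβ⟩ := hB
  obtain ⟨w, rfl⟩ : ∃ w, v = k + w := ⟨v - k, by omega⟩
  obtain rfl : k = d + c := by omega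
  have hcd : d + c - d = c := by omega
  rw [hcd] at hlb hkd
  have hc2 : c ≤ 2 * i := by
    by_contra! h
    nlinarith
  have hwc : c < w := by
    by_contra! h
    nlinarith [Nat.mul_le_mul_left i h, Nat.mul_le_mul_left d hkd]
  have hA1 := nn_zero 𝓑 d i hβ
  have hG : ∀ m t, t ≤ m → ∑ B ∈ 𝓑, (gg B m t : ℝ)
      = 𝓑.card * (((d + c).choose t : ℝ) * (w.choose (m - t) : ℝ)) := by
    intro m t hmt
    have : ∀ B ∈ 𝓑, (gg B m t : ℝ) = ((d + c).choose t : ℝ) * (w.choose (m - t) : ℝ) := by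
      intro B hB
      rw [gg_eq B m t hmt, hk B hB, hcard, Nat.add_sub_cancel_left]
      push_cast; rfl
    rw [sum_congr rfl this, sum_const, nsmul_eq_mul]
  have r1 := nn_rec1 𝓑 (d + 2 * i - 1) (d + i) d (by omega) (by omega) hd (by omega)
  rw [show d + 2 * i - 1 + 1 = d + 2 * i by omega, hA1, hG _ _ (by omega),
    show d + 2 * i - (d + i) = i by omega, ← card_SS] at r1
  rw [Nat.cast_sub (by omega : 1 ≤ d + 2 * i)] at r1
  have r2 := nn_rec2 𝓑 (d + 2 * i) (d + i + 1) d (by omega) (by omega) hd (by omega)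
  rw [← card_SS, hG _ _ (by omega), show d + 2 * i + 1 - (d + i + 1) = i by omega] at r2
  have r3 := nn_rec1 𝓑 (d + 2 * i + 1) (d + i + 1) d (by omega) (by omega) hd (by omega)
  rw [show d + 2 * i + 1 + 1 = d + 2 * (i + 1) by omega, hG _ _ (by omega),
    show d + 2 * (i + 1) - (d + i + 1) = i + 1 by omega,
    show d + i + 1 + 1 = d + (i + 1) + 1 by omega, ← card_SS] at r3
  rw [hcard] at r1 r2 r3
  set b : ℝ := (𝓑.card : ℝ) with hb
  set n1 : ℝ := ((SS 𝓑 d i).card : ℝ) with hn1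
  set n2 : ℝ := ((SS 𝓑 d (i + 1)).card : ℝ) with hn2
  set U : ℝ := (nn 𝓑 (d + 2 * i + 1) (d + i + 1) : ℝ) with hU
  have sp1 := congrArg (Nat.cast : ℕ → ℝ) (sum_pp 𝓑 d i hd)
  have sp2 := congrArg (Nat.cast : ℕ → ℝ) (sum_pp 𝓑 d (i + 1) hd)
  have sq1 := congrArg (Nat.cast : ℕ → ℝ) (sum_pp_sq 𝓑 (d + c) d i hk hd)
  have sq2 := congrArg (Nat.cast : ℕ → ℝ) (sum_pp_sq 𝓑 (d + c) d (i + 1) hk hd)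
  rw [hcd] at sq1 sq2
  rw [Nat.cast_sum, Nat.cast_sum, hG _ _ (by omega), show d + 2 * i - (d + i) = i by omega] at sp1
  rw [Nat.cast_sum, Nat.cast_sum, hG _ _ (by omega),
    show d + 2 * (i + 1) - (d + (i + 1)) = i + 1 by omega, ← add_assoc] at sp2
  rw [Nat.cast_add, Nat.cast_sum, Nat.cast_sum, sp1] at sq1
  rw [Nat.cast_add, Nat.cast_sum, Nat.cast_sum, sp2] at sq2
  push_cast at sq1 sq2 r1 r2 r3
  have hi' : (1 : ℝ) ≤ i := by exact_mod_cast hi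
  have hd' : (0 : ℝ) ≤ d := Nat.cast_nonneg d
  have hc1' : (i : ℝ) + 1 ≤ c := by exact_mod_cast hkd
  have hc2' : (c : ℝ) ≤ 2 * i := by exact_mod_cast hc2
  have hwc' : (c : ℝ) < w := by exact_mod_cast hwc
  have hlb' : ((d : ℝ) + 2 * i) * c < i * (d + c + w) := by exact_mod_cast hlb
  have c1 : ((d + c).choose (d + i + 1) : ℝ) * (d + i + 1) = (d + c).choose (d + i) * ((c : ℝ) - i) := by
    have := congrArg (Nat.cast : ℕ → ℝ) (Nat.choose_succ_right_eq (d + c) (d + i))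
    push_cast [Nat.cast_sub (show d + i ≤ d + c by omega)] at this
    rw [this]; ring
  have c2 : (w.choose (i + 1) : ℝ) * (i + 1) = w.choose i * ((w : ℝ) - i) := by
    have := congrArg (Nat.cast : ℕ → ℝ) (Nat.choose_succ_right_eq w i)
    rw [Nat.cast_mul, Nat.cast_mul, Nat.cast_sub (show i ≤ w by omega), Nat.cast_add,
      Nat.cast_one] at this
    exact this
  have c3 : (c.choose (i + 1) : ℝ) * (i + 1) = c.choose i * ((c : ℝ) - i) := by
    have := congrArg (Nat.cast : ℕ → ℝ) (Nat.choose_succ_right_eq c i)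
    rw [Nat.cast_mul, Nat.cast_mul, Nat.cast_sub (show i ≤ c by omega), Nat.cast_add,
      Nat.cast_one] at this
    exact this
  have hcon : (i : ℝ) ^ 2 * ∑ X ∈ SS 𝓑 d i, (pp 𝓑 d i X : ℝ) ^ 2 = ((d : ℝ) + 2 * i) ^ 2 * n1 := by
    have : ∀ X ∈ SS 𝓑 d i, (i : ℝ) ^ 2 * (pp 𝓑 d i X : ℝ) ^ 2 = ((d : ℝ) + 2 * i) ^ 2 := by
      intro X hX
      rw [← mul_pow]
      congr 1
      exact_mod_cast pp_const 𝓑 d i hi hβ X hX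
    rw [mul_sum, sum_congr rfl this, sum_const, nsmul_eq_mul, mul_comm]
  have hbpos : 0 < b := by rw [hb]; exact_mod_cast (by omega : 0 < 𝓑.card)
  have hA : 0 < b * (((d + c).choose (d + i) : ℝ) * (w.choose i : ℝ)) := by
    have q1 : 0 < (d + c).choose (d + i) := Nat.choose_pos (by omega)
    have q2 : 0 < w.choose i := Nat.choose_pos (by omega)
    exact mul_pos hbpos (mul_pos (Nat.cast_pos.mpr q1) (Nat.cast_pos.mpr q2))
  have hG2 : 0 < b * (((d + c).choose (d + i + 1) : ℝ) * (w.choose (i + 1) : ℝ)) := by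
    have q1 : 0 < (d + c).choose (d + i + 1) := Nat.choose_pos (by omega)
    have q2 : 0 < w.choose (i + 1) := Nat.choose_pos (by omega)
    exact mul_pos hbpos (mul_pos (Nat.cast_pos.mpr q1) (Nat.cast_pos.mpr q2))
  set A := b * (((d + c).choose (d + i) : ℝ) * (w.choose i : ℝ)) with hAdef
  set G1 := b * (((d + c).choose (d + i + 1) : ℝ) * (w.choose i : ℝ)) with hG1def
  set G2 := b * (((d + c).choose (d + i + 1) : ℝ) * (w.choose (i + 1) : ℝ)) with hG2def
  have h3 : ((d : ℝ) + 2 * i) * n1 = i * A := by linear_combination r1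
  have h7 : (i : ℝ) * ((NN 𝓑 d : ℝ) * (c.choose i : ℝ) ^ 2) = (d + i) * A := by
    have hne : (i : ℝ) ≠ 0 := by positivity
    apply mul_left_cancel₀ hne
    linear_combination hcon - (i : ℝ) ^ 2 * sq1 + ((d : ℝ) + 2 * i) * h3
  have hid := main_identity ((d : ℝ) + c + w) ((d : ℝ) + c) c d i w A G1 G2 n1 U n2 (NN 𝓑 d)
    (c.choose i) (c.choose (i + 1)) hi' hd' rfl rfl
    (by rw [hG1def, hAdef]; linear_combination b * (w.choose i : ℝ) * c1)
    (by rw [hG1def, hG2def]; linear_combination b * ((d + c).choose (d + i + 1) : ℝ) * c2)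
    h3 (by linear_combination r2) (by linear_combination r3) (by linear_combination c3) h7
  have hSpos : 0 < (SS 𝓑 d (i + 1)).card := by
    rw [card_pos, nonempty_iff_ne_empty]
    intro h
    rw [h, sum_empty] at sp2
    linarith
  obtain ⟨hcs, hcs'⟩ := cs_const (SS 𝓑 d (i + 1)) (pp 𝓑 d (i + 1)) hSpos
  rw [sq2, sp2, ← hn2] at hcs hcs'
  set D : ℝ := -4 * (i : ℝ) * ((c : ℝ) - (i : ℝ)) * ((c : ℝ) - 2 * (i : ℝ) - 1) * (d : ℝ) ^ 2
           - 4 * (i : ℝ) * (3 * (i : ℝ) + 1) * ((c : ℝ) - (i : ℝ))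
              * ((c : ℝ) - 2 * (i : ℝ) - 1) * (d : ℝ)
           - (i : ℝ) ^ 2 * (4 * (2 * (i : ℝ) + 1) * (c : ℝ) ^ 2
              - 4 * (2 * (i : ℝ) + 1) * (3 * (i : ℝ) + 1) * (c : ℝ)
              + 16 * (i : ℝ) ^ 3 + 15 * (i : ℝ) ^ 2 + 2 * (i : ℝ) - 1) with hD
  set T : ℝ := 2 * i * (i + 1) * w - i * (2 * (c - i) * d + 2 * i * c + 3 * i + 1) with hT
  have hK1 : 0 < 4 * (i : ℝ) ^ 2 * (i + 1) ^ 3 * (d + i + 1) * (d + 2 * i + 2) * (d + 2 * i)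
      * (d + 2 * i + 1) := by positivity
  have hK2 : 0 < A ^ 2 * ((c : ℝ) - i) * (i * ((d : ℝ) + c + w) - (d + 2 * i) * c) := by
    have q1 : 0 < (c : ℝ) - i := by linarith
    have q2 : 0 < i * ((d : ℝ) + c + w) - (d + 2 * i) * c := by linarith
    exact mul_pos (mul_pos (pow_pos hA 2) q1) q2
  have hTD : 0 ≤ T ^ 2 - D := by
    have := mul_nonneg hcs hK1.le
    rw [hid] at this
    exact nonneg_of_mul_nonneg_right this hK2
  have hzero : T ^ 2 - D = 0 ↔ n2 * (G2 + (NN 𝓑 d : ℝ) * (c.choose (i + 1) : ℝ) ^ 2) - G2 ^ 2 = 0 := by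
    constructor
    · intro h
      rw [h, mul_zero] at hid
      exact (mul_eq_zero.mp hid).resolve_right hK1.ne'
    · intro h
      rw [h, zero_mul] at hid
      exact (mul_eq_zero.mp hid.symm).resolve_left hK2.ne'
  have hfin := final_real ((d : ℝ) + c + w) ((d : ℝ) + c) c d i hi' hd' hc1' hc2' rfl hlb'
    γ₂ D T hD hγ₂ (by rw [hT]; ring) hTD
  push_cast
  refine ⟨hfin.1, hfin.2.trans (hzero.trans (hcs'.trans ?_))⟩
  exact Iff.rfl
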